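/- Let n ≥ 3 and let p₁, …, p_{n−1} be distinct prime numbers such that ∑_{i=1}^{n−1} 1/pᵢ ≤ 1. Then the set of prime numbers q with q ∉ {p₁, …, p_{n−1}} such that the rectangular simplex Δ(p₁, …, p_{n−1}, q) is maximally non-normal (i.e. μ_norm(Δ(p₁, …, p_{n−1}, q)) = n − 1) is infinite. -/

import Mathlib

/-- A point of `ℝⁿ` is a lattice point if all its coordinates are integers. -/
def IsLatticePoint {n : ℕ} (x : Fin n → ℝ) : Prop := ∀ i, ∃ z : ℤ, x i = (z : ℝ)

/-- The `k`-th dilation `kS = {k • x : x ∈ S}` of a set `S ⊆ ℝⁿ`. -/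
def dilate {n : ℕ} (k : ℕ) (P : Set (Fin n → ℝ)) : Set (Fin n → ℝ) :=
  (fun x => (k : ℝ) • x) '' P

/-- Every lattice point of `kP` is a sum of `k` lattice points of `P`. -/
def IsIDP {n : ℕ} (k : ℕ) (P : Set (Fin n → ℝ)) : Prop :=
  ∀ x ∈ dilate k P, IsLatticePoint x →
    ∃ f : Fin k → (Fin n → ℝ), (∀ i, f i ∈ P ∧ IsLatticePoint (f i)) ∧ x = ∑ i, f i

/-- A polytope is normal if for every `k ≥ 1` every lattice point of `kP`
is a sum of `k` lattice points of `P`. -/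
def IsNormal {n : ℕ} (P : Set (Fin n → ℝ)) : Prop := ∀ k : ℕ, 1 ≤ k → IsIDP k P

/-- A polytope is very ample if there is `k₀` such that for every `k ≥ k₀` every
lattice point of `kP` is a sum of `k` lattice points of `P`. -/
def IsVeryAmple {n : ℕ} (P : Set (Fin n → ℝ)) : Prop :=
  ∃ k₀ : ℕ, ∀ k : ℕ, k₀ ≤ k → IsIDP k P

/-- The rectangular simplex `Δ(λ) = conv{0, λ₁e₁, …, λₙeₙ}`. -/
def rectSimplex {n : ℕ} (lam : Fin n → ℕ) : Set (Fin n → ℝ) :=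
  convexHull ℝ (insert 0 (Set.range fun i => Pi.single i ((lam i : ℝ))))

/-- An edge of `P`: a segment between two distinct extreme points of `P`
which is an extreme subset of `P`. -/
def IsEdge {n : ℕ} (P : Set (Fin n → ℝ)) (v w : Fin n → ℝ) : Prop :=
  v ≠ w ∧ v ∈ P.extremePoints ℝ ∧ w ∈ P.extremePoints ℝ ∧
    IsExtreme ℝ P (segment ℝ v w)

/-- `P` has at least `k` lattice points on every edge. -/
def LPE {n : ℕ} (k : ℕ) (P : Set (Fin n → ℝ)) : Prop :=
  ∀ v w, IsEdge P v w →
    ∃ S : Finset (Fin n → ℝ), k ≤ S.card ∧ ∀ x ∈ S, x ∈ segment ℝ v w ∧ IsLatticePoint x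

/-- The normality index: the least `k₀` such that `kP` is normal for all `k ≥ k₀`. -/
noncomputable def munorm {n : ℕ} (P : Set (Fin n → ℝ)) : ℕ :=
  sInf {k₀ : ℕ | ∀ k : ℕ, k₀ ≤ k → IsNormal (dilate k P)}

/-- Almost 1-normality: with `L = lcm λᵢ`, `Lᵢ = L/λᵢ`, `d = gcd Lᵢ`, the number
`L - d` lies in the additive submonoid of `ℕ` generated by the `Lᵢ`. -/
def IsA1N {n : ℕ} (lam : Fin n → ℕ) : Prop :=
  Finset.univ.lcm lam - Finset.univ.gcd (fun i => Finset.univ.lcm lam / lam i) ∈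
    AddSubmonoid.closure (Set.range fun i => Finset.univ.lcm lam / lam i)

/-!
A lattice point `a` lies in `kΔ(λ)` exactly when its weight `∑ aᵢ/λᵢ` is at most `k`. A greedy
argument splits off a summand of weight at most `1` as long as the weight bound is at least `n`, so
`kΔ(λ)` is normal for every `k ≥ n - 1`.

For pairwise coprime `λ`, weights are multiples of `1/(λ₁ ⋯ λₙ)`, and a point of integral weight is
an integral combination of the vertices. Hence a point of weight `2k - 1/(λ₁ ⋯ λₙ)` can be the sum
of two points of `kΔ(λ)` only if it dominates coordinatewise a sum of `k` vertices. For
`λ = (p₁, …, p_{n-1}, q)` and `k = n - 2` a point of this weight with `i`-th coordinate `pᵢ - 1` for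
all `i < n` exists as soon as `q · ∑ᵢ ∏_{j ≠ i} pⱼ ≡ 1` modulo `p₁ ⋯ p_{n-1}`, and the hypothesis
`∑ 1/pᵢ ≤ 1` keeps its last coordinate below `(n - 2)q`. Dirichlet's theorem provides infinitely
many such primes `q`.
-/

open scoped Function Matrix

section FacetWeight

variable {ι : Type*} [Fintype ι] [DecidableEq ι]

/-- The products `∏_{j ≠ i} λⱼ`. For a lattice point `a` with natural coordinates,
`a ⬝ᵥ complProd λ = (∏ λⱼ) · ∑ aᵢ/λᵢ` is the facet weight of `Δ(λ)` cleared of denominators; the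
full product is used instead of the least common multiple, with which it agrees for pairwise
coprime `λ`. -/
def complProd (lam : ι → ℕ) (i : ι) : ℕ := ∏ j ∈ Finset.univ.erase i, lam j

variable {lam : ι → ℕ}

lemma mul_complProd (lam : ι → ℕ) (i : ι) : lam i * complProd lam i = ∏ j, lam j :=
  Finset.mul_prod_erase _ _ (Finset.mem_univ i)

lemma complProd_pos (hpos : ∀ i, 0 < lam i) (i : ι) : 0 < complProd lam i :=
  Finset.prod_pos fun j _ ↦ hpos j

lemma self_dotProduct_complProd (lam : ι → ℕ) :
    lam ⬝ᵥ complProd lam = Fintype.card ι * ∏ i, lam i := by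
  simp [dotProduct, mul_complProd]

lemma cast_dotProduct_complProd (hpos : ∀ i, 0 < lam i) (a : ι → ℕ) :
    ((a ⬝ᵥ complProd lam : ℕ) : ℝ) = (∑ i, (a i : ℝ) / lam i) * (∏ i, lam i : ℕ) := by
  rw [dotProduct, Nat.cast_sum, Finset.sum_mul]
  refine Finset.sum_congr rfl fun i _ ↦ ?_
  have hi : (lam i : ℝ) ≠ 0 := Nat.cast_ne_zero.2 (hpos i).ne'
  rw [← mul_complProd lam i]
  push_cast
  field_simp

lemma sum_div_le_iff (hpos : ∀ i, 0 < lam i) (a : ι → ℕ) (k : ℕ) :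
    ∑ i, (a i : ℝ) / lam i ≤ k ↔ a ⬝ᵥ complProd lam ≤ k * ∏ i, lam i := by
  have hprod : (0 : ℝ) < (∏ i, lam i : ℕ) := Nat.cast_pos.2 (Finset.prod_pos fun i _ ↦ hpos i)
  rw [← Nat.cast_le (α := ℝ), cast_dotProduct_complProd hpos, Nat.cast_mul,
    mul_le_mul_iff_of_pos_right hprod]

lemma dotProduct_complProd_modEq (lam a : ι → ℕ) (i : ι) :
    a ⬝ᵥ complProd lam ≡ a i * complProd lam i [MOD lam i] := by
  have hdvd : lam i ∣ ∑ j ∈ Finset.univ.erase i, a j * complProd lam j :=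
    Finset.dvd_sum fun j hj ↦ dvd_mul_of_dvd_right (Finset.dvd_prod_of_mem _
      (Finset.mem_erase.2 ⟨(Finset.ne_of_mem_erase hj).symm, Finset.mem_univ i⟩)) _
  rw [dotProduct, ← Finset.add_sum_erase _ _ (Finset.mem_univ i)]
  simpa using ((Nat.modEq_zero_iff_dvd.2 hdvd).add_left (a i * complProd lam i))

lemma coprime_complProd (hcop : Pairwise (Nat.Coprime on lam)) (i : ι) :
    (lam i).Coprime (complProd lam i) :=
  Nat.Coprime.prod_right fun _ hj ↦ hcop (Finset.ne_of_mem_erase hj).symm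

lemma dvd_dotProduct_complProd_iff (hcop : Pairwise (Nat.Coprime on lam)) (a : ι → ℕ) (i : ι) :
    lam i ∣ a ⬝ᵥ complProd lam ↔ lam i ∣ a i :=
  ((dotProduct_complProd_modEq lam a i).dvd_iff dvd_rfl).trans
    (coprime_complProd hcop i).dvd_mul_right

lemma coprime_sum_complProd_prod (hcop : Pairwise (Nat.Coprime on lam)) :
    (∑ i, complProd lam i).Coprime (∏ i, lam i) := by
  refine Nat.Coprime.prod_right fun i _ ↦ ?_
  have hmod : ∑ j, complProd lam j ≡ complProd lam i [MOD lam i] := by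
    simpa [one_dotProduct] using dotProduct_complProd_modEq lam 1 i
  exact hmod.gcd_eq.trans (coprime_complProd hcop i).symm

lemma sum_div_eq_of_dotProduct_complProd_eq (hpos : ∀ i, 0 < lam i)
    (hcop : Pairwise (Nat.Coprime on lam)) {a : ι → ℕ} {k : ℕ}
    (ha : a ⬝ᵥ complProd lam = k * ∏ i, lam i) : ∑ i, a i / lam i = k := by
  have hdvd (i : ι) : lam i ∣ a i :=
    (dvd_dotProduct_complProd_iff hcop a i).1
      (ha ▸ dvd_mul_of_dvd_right (Finset.dvd_prod_of_mem _ (Finset.mem_univ i)) _)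
  refine Nat.eq_of_mul_eq_mul_right (Finset.prod_pos fun i _ ↦ hpos i) (Eq.trans ?_ ha)
  rw [Finset.sum_mul]
  refine Finset.sum_congr rfl fun i _ ↦ ?_
  rw [← mul_complProd lam i, ← mul_assoc, Nat.div_mul_cancel (hdvd i)]

end FacetWeight

section Decomposition

variable {ι : Type*} [Fintype ι] [DecidableEq ι] {lam : ι → ℕ} {N : ℕ}

/-- A maximal `b ≤ a` of weight at most `1` has weight above `1 - 1/λᵢ` for some `i` with `bᵢ < aᵢ`,
while `a` has weight at most `card ι - 1/λᵢ`. -/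
lemma exists_eq_add_of_forall_lt (hcard : Fintype.card ι ≤ N + 1) {a : ι → ℕ}
    (ha : ∀ i, a i < lam i) :
    ∃ b c : ι → ℕ, a = b + c ∧ b ⬝ᵥ complProd lam ≤ ∏ i, lam i ∧
      c ⬝ᵥ complProd lam ≤ N * ∏ i, lam i := by
  obtain ⟨b, ⟨hba, hb⟩, hmax⟩ :=
    ((Set.finite_Iic a).subset Set.inter_subset_left).exists_maximal
      (s := Set.Iic a ∩ {b | b ⬝ᵥ complProd lam ≤ ∏ i, lam i}) ⟨0, by simp⟩
  have hab : a = b + (a - b) := (add_tsub_cancel_of_le hba).symm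
  refine ⟨b, a - b, hab, hb, ?_⟩
  obtain heq | ⟨i, hi⟩ : b = a ∨ ∃ i, b i < a i := by
    rw [or_iff_not_imp_left]
    intro hne
    exact (Pi.lt_def.1 (lt_of_le_of_ne hba hne)).2
  · simp [heq]
  have hle_add (u v : ι → ℕ) (huv : ∀ j, u j ≤ v j) (hlt : u i < v i) : u + Pi.single i 1 ≤ v := by
    intro j
    obtain rfl | hj := eq_or_ne j i
    · simpa using hlt
    · simpa [hj] using huv j
  have hb_large : ∏ j, lam j < b ⬝ᵥ complProd lam + complProd lam i := by
    by_contra! hle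
    have := hmax (y := b + Pi.single i 1) ⟨hle_add b a hba hi, by simpa using hle⟩ (by simp) i
    simp at this
  have ha_small : a ⬝ᵥ complProd lam + complProd lam i ≤ (N + 1) * ∏ j, lam j :=
    calc a ⬝ᵥ complProd lam + complProd lam i
        = (a + Pi.single i 1) ⬝ᵥ complProd lam := by simp
      _ ≤ lam ⬝ᵥ complProd lam := dotProduct_le_dotProduct_of_nonneg_right
          (hle_add a lam (fun j ↦ (ha j).le) (ha i)) fun _ ↦ Nat.zero_le _
      _ ≤ (N + 1) * ∏ j, lam j := by
          rw [self_dotProduct_complProd]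
          exact Nat.mul_le_mul_right _ hcard
  rw [hab, add_dotProduct] at ha_small
  linarith

lemma exists_eq_add_dotProduct_complProd_le_prod (hcard : Fintype.card ι ≤ N + 1) {a : ι → ℕ}
    (ha : a ⬝ᵥ complProd lam ≤ (N + 1) * ∏ i, lam i) :
    ∃ b c : ι → ℕ, a = b + c ∧ b ⬝ᵥ complProd lam ≤ ∏ i, lam i ∧
      c ⬝ᵥ complProd lam ≤ N * ∏ i, lam i := by
  by_cases hsmall : ∀ i, a i < lam i
  · exact exists_eq_add_of_forall_lt hcard hsmall
  push Not at hsmall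
  obtain ⟨i, hi⟩ := hsmall
  have hvertex : Pi.single i (lam i) ⬝ᵥ complProd lam = ∏ j, lam j := by
    rw [single_dotProduct, mul_complProd]
  have hab : a = Pi.single i (lam i) + (a - Pi.single i (lam i)) := by
    refine (add_tsub_cancel_of_le fun j ↦ ?_).symm
    obtain rfl | hj := eq_or_ne j i
    · simpa using hi
    · simp [hj]
  refine ⟨_, _, hab, hvertex.le, ?_⟩
  rw [hab, add_dotProduct, hvertex] at ha
  linarith

lemma exists_eq_add_dotProduct_complProd_le (hcard : Fintype.card ι ≤ N + 1) (k : ℕ) {a : ι → ℕ}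
    (ha : a ⬝ᵥ complProd lam ≤ (N + k) * ∏ i, lam i) :
    ∃ b c : ι → ℕ, a = b + c ∧ b ⬝ᵥ complProd lam ≤ k * ∏ i, lam i ∧
      c ⬝ᵥ complProd lam ≤ N * ∏ i, lam i := by
  induction k generalizing a with
  | zero => exact ⟨0, a, by simp, by simp, by simpa using ha⟩
  | succ k ih =>
    obtain ⟨b, c, rfl, hb, hc⟩ :=
      exists_eq_add_dotProduct_complProd_le_prod (N := N + k) (by omega) ha
    obtain ⟨b', c', rfl, hb', hc'⟩ := ih hc
    refine ⟨b + b', c', (add_assoc _ _ _).symm, ?_, hc'⟩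
    rw [add_dotProduct]
    linarith

lemma exists_eq_sum_dotProduct_complProd_le {k : ℕ} (hcard : Fintype.card ι ≤ k + 1) (m : ℕ)
    {a : ι → ℕ} (ha : a ⬝ᵥ complProd lam ≤ (m + 1) * k * ∏ i, lam i) :
    ∃ f : Fin (m + 1) → ι → ℕ,
      (∀ t, f t ⬝ᵥ complProd lam ≤ k * ∏ i, lam i) ∧ a = ∑ t, f t := by
  induction m generalizing a with
  | zero => exact ⟨fun _ ↦ a, fun _ ↦ by simpa using ha, by simp⟩
  | succ m ih =>
    obtain ⟨b, c, rfl, hb, hc⟩ :=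
      exists_eq_add_dotProduct_complProd_le (N := (m + 1) * k) (by linarith [Nat.zero_le (m * k)]) k
        (ha.trans_eq (by ring))
    obtain ⟨f, hf, rfl⟩ := ih hc
    exact ⟨Fin.cons b f, Fin.cases hb hf, by simp [Fin.sum_univ_succ]⟩

end Decomposition

section RectSimplex

variable {n : ℕ} {lam : Fin n → ℕ}

lemma mem_rectSimplex_iff (hpos : ∀ i, 0 < lam i) {x : Fin n → ℝ} :
    x ∈ rectSimplex lam ↔ 0 ≤ x ∧ ∑ i, x i / lam i ≤ 1 := by
  have hlam (i : Fin n) : (lam i : ℝ) ≠ 0 := Nat.cast_ne_zero.2 (hpos i).ne'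
  constructor
  · intro hx
    have hlin : IsLinearMap ℝ fun x : Fin n → ℝ ↦ ∑ i, x i / (lam i : ℝ) :=
      ⟨fun x y ↦ by simp [add_div, Finset.sum_add_distrib],
        fun c x ↦ by simp [mul_div_assoc, Finset.mul_sum]⟩
    refine convexHull_min ?_ ((convex_Ici 0).inter (convex_halfSpace_le hlin 1)) hx
    rintro _ (rfl | ⟨i, rfl⟩)
    · simp
    · refine ⟨Pi.single_nonneg.2 (Nat.cast_nonneg _), ?_⟩
      simp [Pi.single_apply, ite_div, hlam]
  · rintro ⟨hx, hsum⟩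
    refine mem_convexHull_of_exists_fintype
      (fun o : Option (Fin n) ↦ o.elim (1 - ∑ i, x i / lam i) fun i ↦ x i / lam i)
      (fun o ↦ o.elim 0 fun i ↦ Pi.single i (lam i : ℝ)) ?_ ?_ ?_ ?_
    · rintro (_ | i)
      · simpa using hsum
      · exact div_nonneg (hx i) (Nat.cast_nonneg _)
    · simp [Fintype.sum_option]
    · rintro (_ | i)
      · exact Set.mem_insert _ _
      · exact Set.mem_insert_of_mem _ ⟨i, rfl⟩
    · ext j
      simp [Fintype.sum_option, Pi.single_apply, hlam]

lemma mem_dilate_rectSimplex_iff (hpos : ∀ i, 0 < lam i) {k : ℕ} (hk : 0 < k) {x : Fin n → ℝ} :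
    x ∈ dilate k (rectSimplex lam) ↔ 0 ≤ x ∧ ∑ i, x i / lam i ≤ k := by
  have hk' : (0 : ℝ) < k := Nat.cast_pos.2 hk
  rw [dilate, Set.image_smul, Set.mem_smul_set_iff_inv_smul_mem₀ hk'.ne', mem_rectSimplex_iff hpos,
    le_inv_smul_iff_of_pos hk', smul_zero]
  have hsum : ∑ i, ((k : ℝ)⁻¹ • x) i / lam i = (k : ℝ)⁻¹ * ∑ i, x i / lam i := by
    simp [mul_div_assoc, Finset.mul_sum]
  rw [hsum, inv_mul_le_one₀ hk']

lemma natCast_mem_dilate_rectSimplex_iff (hpos : ∀ i, 0 < lam i) {k : ℕ} (hk : 0 < k)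
    (a : Fin n → ℕ) :
    (fun i ↦ (a i : ℝ)) ∈ dilate k (rectSimplex lam) ↔
      a ⬝ᵥ complProd lam ≤ k * ∏ i, lam i := by
  rw [mem_dilate_rectSimplex_iff hpos hk, ← sum_div_le_iff hpos]
  exact and_iff_right fun i ↦ Nat.cast_nonneg _

lemma dilate_dilate (m k : ℕ) (P : Set (Fin n → ℝ)) : dilate m (dilate k P) = dilate (m * k) P := by
  simp [dilate, Set.image_image, smul_smul]

lemma isLatticePoint_natCast (a : Fin n → ℕ) : IsLatticePoint fun i ↦ (a i : ℝ) :=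
  fun i ↦ ⟨a i, by simp⟩

lemma IsLatticePoint.exists_natCast_eq {x : Fin n → ℝ} (hx : IsLatticePoint x) (h0 : 0 ≤ x) :
    ∃ a : Fin n → ℕ, (fun i ↦ (a i : ℝ)) = x := by
  choose z hz using hx
  refine ⟨fun i ↦ (z i).toNat, funext fun i ↦ ?_⟩
  have hzi : 0 ≤ z i := Int.cast_nonneg_iff.1 ((h0 i).trans_eq (hz i))
  rw [hz i]
  exact_mod_cast Int.toNat_of_nonneg hzi

lemma isIDP_dilate_rectSimplex_iff (hpos : ∀ i, 0 < lam i) {m k : ℕ} (hm : 0 < m) (hk : 0 < k) :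
    IsIDP m (dilate k (rectSimplex lam)) ↔
      ∀ a : Fin n → ℕ, a ⬝ᵥ complProd lam ≤ m * k * ∏ i, lam i →
        ∃ f : Fin m → Fin n → ℕ,
          (∀ t, f t ⬝ᵥ complProd lam ≤ k * ∏ i, lam i) ∧ a = ∑ t, f t := by
  have hmk : 0 < m * k := Nat.mul_pos hm hk
  rw [IsIDP, dilate_dilate]
  constructor
  · intro h a ha
    obtain ⟨f, hf, hsum⟩ := h _ ((natCast_mem_dilate_rectSimplex_iff hpos hmk a).2 ha)
      (isLatticePoint_natCast a)
    choose g hg using fun t ↦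
      (hf t).2.exists_natCast_eq ((mem_dilate_rectSimplex_iff hpos hk).1 (hf t).1).1
    refine ⟨g, fun t ↦ (natCast_mem_dilate_rectSimplex_iff hpos hk _).1 (hg t ▸ (hf t).1), ?_⟩
    ext i
    have hi := congrFun hsum i
    simp only [← hg, Finset.sum_apply] at hi
    simpa using mod_cast hi
  · intro h x hx hlat
    obtain ⟨a, rfl⟩ := hlat.exists_natCast_eq ((mem_dilate_rectSimplex_iff hpos hmk).1 hx).1
    obtain ⟨f, hf, rfl⟩ := h a ((natCast_mem_dilate_rectSimplex_iff hpos hmk a).1 hx)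
    refine ⟨fun t i ↦ f t i, fun t ↦
      ⟨(natCast_mem_dilate_rectSimplex_iff hpos hk _).2 (hf t), isLatticePoint_natCast _⟩, ?_⟩
    ext i
    simp [Finset.sum_apply]

theorem isNormal_dilate_rectSimplex (hpos : ∀ i, 0 < lam i) {k : ℕ} (hk : 0 < k)
    (hnk : n ≤ k + 1) : IsNormal (dilate k (rectSimplex lam)) := by
  rintro (_ | m) hm
  · simp at hm
  · rw [isIDP_dilate_rectSimplex_iff hpos hm hk]
    intro a ha
    exact exists_eq_sum_dotProduct_complProd_le (by simpa using hnk) m (mod_cast ha)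

/-- Of the two summands of `a` in `kΔ(λ)`, one has weight exactly `k`; by coprimality it is then an
integral combination of the vertices, with at most `∑ ⌊aᵢ/λᵢ⌋` terms. -/
theorem not_isNormal_dilate_rectSimplex (hpos : ∀ i, 0 < lam i)
    (hcop : Pairwise (Nat.Coprime on lam)) {k : ℕ} {a : Fin n → ℕ}
    (ha : a ⬝ᵥ complProd lam + 1 = 2 * k * ∏ i, lam i) (hfloor : ∑ i, a i / lam i < k) :
    ¬ IsNormal (dilate k (rectSimplex lam)) := by
  intro hnormal
  have hk : 0 < k := Nat.zero_lt_of_lt hfloor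
  obtain ⟨f, hf, rfl⟩ := (isIDP_dilate_rectSimplex_iff hpos two_pos hk).1
    (hnormal 2 one_le_two) a (by omega)
  obtain ⟨t, ht⟩ : ∃ t, f t ⬝ᵥ complProd lam = k * ∏ i, lam i := by
    rw [Fin.sum_univ_two, add_dotProduct, mul_assoc] at ha
    have h0 := hf 0
    have h1 := hf 1
    obtain h | h : f 0 ⬝ᵥ complProd lam = k * ∏ i, lam i ∨
        f 1 ⬝ᵥ complProd lam = k * ∏ i, lam i := by omega
    exacts [⟨0, h⟩, ⟨1, h⟩]
  have hle : f t ≤ ∑ s, f s := Finset.single_le_sum (fun _ _ ↦ zero_le) (Finset.mem_univ t)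
  refine hfloor.not_ge ?_
  calc k = ∑ i, f t i / lam i := (sum_div_eq_of_dotProduct_complProd_eq hpos hcop ht).symm
    _ ≤ ∑ i, (∑ s, f s) i / lam i := Finset.sum_le_sum fun i _ ↦ Nat.div_le_div_right (hle i)

end RectSimplex

lemma munorm_eq_succ {n k : ℕ} {P : Set (Fin n → ℝ)}
    (hnormal : ∀ j, k < j → IsNormal (dilate j P)) (hnot : ¬ IsNormal (dilate k P)) :
    munorm P = k + 1 := by
  refine IsLeast.csInf_eq ⟨hnormal, fun j hj ↦ ?_⟩
  by_contra! hlt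
  exact hnot (hj k (Nat.le_of_lt_succ hlt))

section Snoc

variable {m q z : ℕ}

lemma complProd_snoc_castSucc {p : Fin m → ℕ} (hpos : ∀ i, 0 < p i) (q : ℕ) (i : Fin m) :
    complProd (Fin.snoc (α := fun _ ↦ ℕ) p q) i.castSucc = complProd p i * q := by
  refine Nat.eq_of_mul_eq_mul_left (hpos i) ?_
  have h := mul_complProd (Fin.snoc (α := fun _ ↦ ℕ) p q) i.castSucc
  rwa [Fin.snoc_castSucc, Fin.prod_snoc, ← mul_complProd p i, mul_assoc] at h

lemma complProd_snoc_last (p : Fin m → ℕ) (q : ℕ) :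
    complProd (Fin.snoc (α := fun _ ↦ ℕ) p q) (Fin.last m) = ∏ i, p i := by
  simp [complProd, Fin.univ_castSuccEmb]

lemma snoc_dotProduct_complProd_snoc {p : Fin m → ℕ} (hpos : ∀ i, 0 < p i) (q : ℕ) (a : Fin m → ℕ)
    (b : ℕ) :
    Fin.snoc (α := fun _ ↦ ℕ) a b ⬝ᵥ complProd (Fin.snoc (α := fun _ ↦ ℕ) p q) =
      (a ⬝ᵥ complProd p) * q + b * ∏ i, p i := by
  simp [dotProduct, Fin.sum_univ_castSucc, complProd_snoc_castSucc hpos, complProd_snoc_last,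
    Finset.sum_mul, mul_assoc]

lemma pairwise_coprime_snoc {p : Fin m → ℕ} (hcop : Pairwise (Nat.Coprime on p))
    (hq : ∀ i, q.Coprime (p i)) :
    Pairwise (Nat.Coprime on (Fin.snoc (α := fun _ ↦ ℕ) p q)) := by
  intro i j
  refine Fin.lastCases ?_ (fun i ↦ ?_) i <;> refine Fin.lastCases ?_ (fun j ↦ ?_) j
  · exact fun h ↦ (h rfl).elim
  · simpa [Function.onFun] using fun _ ↦ hq j
  · simpa [Function.onFun] using (hq i).symm
  · simpa [Function.onFun] using @hcop i j

/-- The witness `(p₁ - 1, …, p_{n-1} - 1, z + mq)` has weight `2(m + 1) - 1/(p₁ ⋯ p_{n-1} q)`. -/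
lemma not_isNormal_dilate_rectSimplex_snoc {p : Fin (m + 2) → ℕ} (hpos : ∀ i, 0 < p i)
    (hcop : Pairwise (Nat.Coprime on p)) (hqcop : ∀ i, q.Coprime (p i)) (hzq : z < q)
    (hz : q * ∑ i, complProd p i = (∏ i, p i) * z + 1) :
    ¬ IsNormal (dilate (m + 1) (rectSimplex (Fin.snoc (α := fun _ ↦ ℕ) p q))) := by
  have hq : 0 < q := Nat.zero_lt_of_lt hzq
  have hweight : (p - 1) ⬝ᵥ complProd p + ∑ i, complProd p i = (m + 2) * ∏ i, p i := by
    rw [← one_dotProduct, ← add_dotProduct, tsub_add_cancel_of_le fun i ↦ hpos i,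
      self_dotProduct_complProd, Fintype.card_fin]
  refine not_isNormal_dilate_rectSimplex (a := Fin.snoc (α := fun _ ↦ ℕ) (p - 1) (z + m * q))
    (Fin.forall_iff_castSucc.2 ⟨by simpa using hq, by simpa using hpos⟩)
    (pairwise_coprime_snoc hcop hqcop) ?_ ?_
  · rw [snoc_dotProduct_complProd_snoc hpos, Fin.prod_snoc]
    linear_combination q * hweight - hz
  · have hfloor (i : Fin (m + 2)) : (p i - 1) / p i = 0 :=
      Nat.div_eq_of_lt (Nat.sub_lt (hpos i) one_pos)
    simp [Fin.sum_univ_castSucc, hfloor, Nat.add_mul_div_right _ _ hq, Nat.div_eq_of_lt hzq]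

theorem munorm_rectSimplex_snoc {p : Fin (m + 2) → ℕ} (hpos : ∀ i, 0 < p i)
    (hcop : Pairwise (Nat.Coprime on p)) (hle : ∑ i, complProd p i ≤ ∏ i, p i) (hq : 0 < q)
    (hmod : q * ∑ i, complProd p i ≡ 1 [MOD ∏ i, p i]) :
    munorm (rectSimplex (Fin.snoc (α := fun _ ↦ ℕ) p q)) = m + 2 := by
  have hqcop (i : Fin (m + 2)) : q.Coprime (p i) :=
    Nat.coprime_fintype_prod_right_iff.1 (Nat.coprime_of_mul_modEq_one _ hmod) i
  have hsum : 0 < ∑ i, complProd p i :=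
    Finset.sum_pos (fun i _ ↦ complProd_pos hpos i) Finset.univ_nonempty
  have hmul : 1 ≤ q * ∑ i, complProd p i := Nat.mul_pos hq hsum
  obtain ⟨z, hz⟩ := (Nat.modEq_iff_dvd' hmul).1 hmod.symm
  have hz' : q * ∑ i, complProd p i = (∏ i, p i) * z + 1 := by omega
  have hzq : z < q := by
    refine Nat.lt_of_mul_lt_mul_left (a := ∏ i, p i) ?_
    linarith [Nat.mul_le_mul_left q hle]
  refine munorm_eq_succ (fun j hj ↦ isNormal_dilate_rectSimplex ?_ (by omega) (by omega))
    (not_isNormal_dilate_rectSimplex_snoc hpos hcop hqcop hzq hz')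
  exact Fin.forall_iff_castSucc.2 ⟨by simpa using hq, by simpa using hpos⟩

end Snoc

lemma infinite_setOf_prime_and_mul_modEq_one {a N : ℕ} (hN : N ≠ 0) (ha : a.Coprime N) :
    {q : ℕ | q.Prime ∧ q * a ≡ 1 [MOD N]}.Infinite := by
  obtain ⟨b, -, hb⟩ := Nat.exists_mul_mod_eq_of_coprime 1 ha hN
  have hb' : b * a ≡ 1 [MOD N] := by rwa [mul_comm]
  refine (Nat.infinite_setOfPred_prime_and_modEq hN (Nat.coprime_of_mul_modEq_one a hb')).mono ?_
  exact fun q ⟨hq, hqb⟩ ↦ ⟨hq, (hqb.mul_right a).trans hb'⟩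

theorem stmt_17_general (n : ℕ) (hn : 3 ≤ n) (p : Fin (n - 1) → ℕ) (hpos : ∀ i, 0 < p i)
    (hcop : Pairwise (Nat.Coprime on p)) (hsum : ∑ i, (1 : ℝ) / (p i : ℝ) ≤ 1) :
    {q : ℕ | q.Prime ∧ q ∉ Set.range p ∧
      munorm (rectSimplex (fun i : Fin n =>
        if h : (i : ℕ) < n - 1 then p ⟨(i : ℕ), h⟩ else q)) = n - 1}.Infinite := by
  obtain ⟨m, rfl⟩ := Nat.exists_eq_add_of_le' hn
  change Fin (m + 2) → ℕ at p
  have hprod : ∏ i, p i ≠ 0 := Finset.prod_ne_zero_iff.2 fun i _ ↦ (hpos i).ne'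
  have hle : ∑ i, complProd p i ≤ ∏ i, p i := by
    simpa [one_dotProduct] using (sum_div_le_iff hpos 1 1).1 (by simpa using hsum)
  refine ((infinite_setOf_prime_and_mul_modEq_one hprod (coprime_sum_complProd_prod hcop)).sdiff
    (Set.finite_range p)).mono ?_
  exact fun q ⟨⟨hq, hmod⟩, hqp⟩ ↦ ⟨hq, hqp, munorm_rectSimplex_snoc hpos hcop hle hq.pos hmod⟩

/-- Let `n ≥ 3` and `p₁, …, p_{n-1}` be distinct primes with
`∑ 1/pᵢ ≤ 1`. Then the set of primes `q ∉ {p₁, …, p_{n-1}}` such that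
`Δ(p₁, …, p_{n-1}, q)` is maximally non-normal is infinite. -/
theorem stmt_17 (n : ℕ) (hn : 3 ≤ n) (p : Fin (n - 1) → ℕ) (hp : ∀ i, (p i).Prime)
    (hinj : Function.Injective p)
    (hsum : ∑ i, (1 : ℝ) / (p i : ℝ) ≤ 1) :
    {q : ℕ | q.Prime ∧ q ∉ Set.range p ∧
      munorm (rectSimplex (fun i : Fin n =>
        if h : (i : ℕ) < n - 1 then p ⟨(i : ℕ), h⟩ else q)) = n - 1}.Infinite :=
  stmt_17_general n hn p (fun i ↦ (hp i).pos)
    (fun i j hij ↦ (Nat.coprime_primes (hp i) (hp j)).2 (hinj.ne hij)) hsum
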